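/- arXiv:2410.17336 — 5 statements merged into one kernel-verified Lean document; each statement's English description precedes it below -/
import Mathlib

section
/- Let N be a norm on ℝ^d satisfying ‖w‖₂ ≤ R·N(w) for all w ∈ ℝ^d, let α, L > 0, and let Σ be a symmetric positive semidefinite d×d matrix with vᵀΣv ≥ α·N(v)² for all v ∈ ℝ^d. Fix x₀, v₀ ∈ ℝ^d and r₀ ∈ ℝ and define g(x) := r₀ + ⟨v₀, x − x₀⟩ + (1/2)(x − x₀)ᵀΣ(x − x₀) − (L/6)‖x − x₀‖₂³. Then g is twice continuously differentiable, and for every x with ‖x − x₀‖₂ ≤ α/(2R²L) and every v ∈ ℝ^d: vᵀ∇²g(x)v ≥ (α/2)·N(v)². -/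
open RealInnerProductSpace

section aux
variable {E : Type*} [NormedAddCommGroup E] [InnerProductSpace ℝ E]

noncomputable def auxB (E : Type*) [NormedAddCommGroup E] [InnerProductSpace ℝ E] :
    E →L[ℝ] E →L[ℝ] ℝ :=
  LinearMap.mkContinuous₂ (innerₗ E) 1 (fun x y => by
    simpa using norm_inner_le_norm (𝕜 := ℝ) x y)

lemma auxB_apply (x y : E) : auxB E x y = ⟪x, y⟫ := rfl

noncomputable def auxD (y : E) : E →L[ℝ] E :=
  ‖y‖ • ContinuousLinearMap.id ℝ E + ‖y‖⁻¹ • (auxB E y).smulRight y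

lemma auxD_apply (y v : E) : auxD y v = ‖y‖ • v + (‖y‖⁻¹ * ⟪y, v⟫) • y := by
  simp [auxD, auxB_apply, smul_smul]

lemma auxD_norm (y : E) : ‖auxD y‖ ≤ 2 * ‖y‖ := by
  refine ContinuousLinearMap.opNorm_le_bound _ (by positivity) fun v => ?_
  rw [auxD_apply]
  refine (norm_add_le _ _).trans ?_
  rw [norm_smul, norm_smul, norm_mul, norm_inv, norm_norm]
  have h := norm_inner_le_norm (𝕜 := ℝ) y v
  have : ‖y‖⁻¹ * ‖⟪y, v⟫‖ ≤ ‖v‖ := by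
    rcases eq_or_ne y 0 with rfl | hy
    · simp
    · rw [inv_mul_le_iff₀ (norm_pos_iff.2 hy)]; exact h
  nlinarith [norm_nonneg y]

lemma norm_hasFDerivAt {y : E} (hy : y ≠ 0) :
    HasFDerivAt (fun y : E => ‖y‖) (‖y‖⁻¹ • auxB E y) y := by
  have h1 : HasFDerivAt (fun y : E => ‖y‖ ^ 2) (2 • auxB E y) y := by
    have := (hasStrictFDerivAt_norm_sq y).hasFDerivAt
    exact this
  have h2 := h1.sqrt (by positivity)
  simp only [Real.sqrt_sq (norm_nonneg _)] at h2
  convert h2 using 1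
  ext v
  have : ‖y‖ ≠ 0 := norm_ne_zero_iff.2 hy
  simp
  field_simp

lemma auxG_hasFDerivAt (y : E) : HasFDerivAt (fun y : E => ‖y‖ • y) (auxD y) y := by
  rcases eq_or_ne y 0 with rfl | hy
  · have : auxD (0 : E) = 0 := by ext v; simp [auxD_apply]
    rw [this, hasFDerivAt_iff_isLittleO_nhds_zero]
    simp only [zero_add, norm_zero, zero_smul, sub_zero, ContinuousLinearMap.zero_apply]
    rw [Asymptotics.isLittleO_iff]
    intro c hc
    filter_upwards [Metric.ball_mem_nhds (0 : E) hc] with z hz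
    rw [norm_smul, norm_norm]
    have : ‖z‖ < c := by simpa using hz
    gcongr
  · have h := (norm_hasFDerivAt hy).smul (hasFDerivAt_id y)
    refine h.congr_fderiv ?_
    ext v
    simp [auxD_apply, auxB_apply]

lemma auxD_continuous : Continuous (auxD : E → E →L[ℝ] E) := by
  rw [continuous_iff_continuousAt]
  intro y
  rcases eq_or_ne y 0 with rfl | hy
  · have h0 : auxD (0 : E) = 0 := by ext v; simp [auxD_apply]
    rw [ContinuousAt, h0]
    refine squeeze_zero_norm auxD_norm ?_
    have : Continuous (fun y : E => 2 * ‖y‖) := by fun_prop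
    simpa using this.tendsto 0
  · have hn : ‖y‖ ≠ 0 := norm_ne_zero_iff.2 hy
    unfold auxD
    have h3 : Continuous (fun y : E => (auxB E y).smulRight y) := by
      have : Continuous (fun y : E => ContinuousLinearMap.smulRightL ℝ E E (auxB E y) y) := by
        fun_prop
      exact this
    have h1 : ContinuousAt (fun y : E => ‖y‖) y := by fun_prop
    exact (h1.smul continuousAt_const).add ((h1.inv₀ hn).smul h3.continuousAt)

lemma auxG_contDiff : ContDiff ℝ 1 (fun y : E => ‖y‖ • y) :=
  contDiff_one_iff_hasFDerivAt.2 ⟨auxD, auxD_continuous, auxG_hasFDerivAt⟩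

lemma cube_hasFDerivAt (y : E) :
    HasFDerivAt (fun y : E => ‖y‖ ^ 3) ((3 : ℝ) • auxB E (‖y‖ • y)) y := by
  rcases eq_or_ne y 0 with rfl | hy
  · simp only [norm_zero, zero_smul, map_zero, smul_zero]
    rw [hasFDerivAt_iff_isLittleO_nhds_zero]
    simp only [zero_add, norm_zero, sub_zero, ContinuousLinearMap.zero_apply]
    have := Asymptotics.isLittleO_norm_pow_id (E' := E) (n := 3) (by norm_num)
    simpa using this
  · refine ((norm_hasFDerivAt hy).pow 3).congr_fderiv ?_
    have : ‖y‖ ≠ 0 := norm_ne_zero_iff.2 hy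
    ext v
    simp
    field_simp
end aux



/-- For a norm `N` on `ℝ^d` with `‖w‖₂ ≤ R·N(w)`, a symmetric PSD matrix
`Σ` with `vᵀΣv ≥ α·N(v)²`, the quasi-quadratic function
`g(x) = r₀ + ⟨v₀, x−x₀⟩ + ½ (x−x₀)ᵀΣ(x−x₀) − (L/6)‖x−x₀‖³` is `C²` and satisfies
`vᵀ∇²g(x)v ≥ (α/2)N(v)²` whenever `‖x−x₀‖ ≤ α/(2R²L)`. -/
theorem stmt1 {d : ℕ} (N : EuclideanSpace ℝ (Fin d) → ℝ) (R α L : ℝ)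
    (hR : 0 < R) (hα : 0 < α) (hL : 0 < L)
    (hN_add : ∀ x y, N (x + y) ≤ N x + N y)
    (hN_smul : ∀ (c : ℝ) x, N (c • x) = |c| * N x)
    (hN_def : ∀ x, N x = 0 → x = 0)
    (hNR : ∀ w : EuclideanSpace ℝ (Fin d), ‖w‖ ≤ R * N w)
    (A : Matrix (Fin d) (Fin d) ℝ) (hA : A.PosSemidef)
    (hAN : ∀ v : EuclideanSpace ℝ (Fin d), α * N v ^ 2 ≤ ⟪v, Matrix.toEuclideanLin A v⟫)
    (x₀ v₀ : EuclideanSpace ℝ (Fin d)) (r₀ : ℝ)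
    (g : EuclideanSpace ℝ (Fin d) → ℝ)
    (hg : ∀ x, g x = r₀ + ⟪v₀, x - x₀⟫
        + (1 / 2) * ⟪x - x₀, Matrix.toEuclideanLin A (x - x₀)⟫
        - (L / 6) * ‖x - x₀‖ ^ 3) :
    ContDiff ℝ 2 g ∧
      ∀ x : EuclideanSpace ℝ (Fin d), ‖x - x₀‖ ≤ α / (2 * R ^ 2 * L) →
        ∀ v : EuclideanSpace ℝ (Fin d),
          (α / 2) * N v ^ 2 ≤ fderiv ℝ (fderiv ℝ g) x v v := by
  set T : EuclideanSpace ℝ (Fin d) →L[ℝ] EuclideanSpace ℝ (Fin d) :=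
    LinearMap.toContinuousLinearMap (Matrix.toEuclideanLin A) with hT
  have hTa : ∀ z, Matrix.toEuclideanLin A z = T z := fun z => rfl
  have hsym : ∀ u w, ⟪u, T w⟫ = ⟪w, T u⟫ := by
    intro u w
    have h := (Matrix.isSymmetric_toEuclideanLin_iff.2 hA.isHermitian) u w
    rw [← hTa, ← h, real_inner_comm]
    rfl
  simp only [hTa] at hg hAN
  let F : EuclideanSpace ℝ (Fin d) → (EuclideanSpace ℝ (Fin d) →L[ℝ] ℝ) := fun x =>
    auxB _ (v₀ + T (x - x₀) - (L / 2) • (‖x - x₀‖ • (x - x₀)))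
  have hgF : ∀ x, HasFDerivAt g (F x) x := by
    intro x
    have e : g = fun x => r₀ + ⟪v₀, x - x₀⟫ + (1 / 2) * ⟪x - x₀, T (x - x₀)⟫
        - (L / 6) * ‖x - x₀‖ ^ 3 := funext hg
    have hs : HasFDerivAt (fun x => x - x₀) (ContinuousLinearMap.id ℝ _) x :=
      (hasFDerivAt_id x).sub_const x₀
    have hc := (cube_hasFDerivAt (x - x₀)).comp x hs
    have hl := ((auxB _ v₀).hasFDerivAt (x := x - x₀)).comp x hs
    have hq := hs.inner ℝ ((T.hasFDerivAt (x := x - x₀)).comp x hs)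
    have := ((hl.const_add r₀).add (hq.const_mul (1 / 2))).sub (hc.const_mul (L / 6))
    rw [e]
    refine this.congr_fderiv ?_
    ext v
    simp only [F, auxB_apply, inner_add_left, inner_sub_left, inner_smul_left, map_add, map_sub,
      map_smul]
    simp [auxB_apply, inner_smul_left]
    have h1 := hsym (x - x₀) v
    rw [map_sub] at h1
    have h2 : ⟪v, T x - T x₀⟫ = ⟪T x, v⟫ - ⟪T x₀, v⟫ := by
      rw [real_inner_comm, inner_sub_left]
    rw [h1, h2]
    ring
  have hF : fderiv ℝ g = F := funext fun x => (hgF x).fderiv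
  have hFc : ContDiff ℝ 1 F := by
    have h1 : ContDiff ℝ 1 (fun x : EuclideanSpace ℝ (Fin d) => ‖x - x₀‖ • (x - x₀)) :=
      auxG_contDiff.comp (contDiff_id.sub contDiff_const)
    have h2 : ContDiff ℝ 1 (fun x => v₀ + T (x - x₀) - (L / 2) • (‖x - x₀‖ • (x - x₀))) :=
      (contDiff_const.add (T.contDiff.comp (contDiff_id.sub contDiff_const))).sub
        (h1.const_smul _)
    exact (auxB _).contDiff.comp h2
  refine ⟨?_, ?_⟩
  · rw [show (2 : WithTop ℕ∞) = 1 + 1 by norm_num, contDiff_succ_iff_fderiv]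
    refine ⟨fun x => (hgF x).differentiableAt, by simp, ?_⟩
    rw [hF]; exact hFc
  · intro x hx v
    have hs : HasFDerivAt (fun x => x - x₀) (ContinuousLinearMap.id ℝ _) x :=
      (hasFDerivAt_id x).sub_const x₀
    have h1 := (auxG_hasFDerivAt (x - x₀)).comp x hs
    have h2 := (((T.hasFDerivAt (x := x - x₀)).comp x hs).const_add v₀).sub
      (h1.const_smul (L / 2))
    have h3 : HasFDerivAt F _ x := ((auxB _).hasFDerivAt).comp x h2
    rw [hF, h3.fderiv]
    have e : ∀ D : EuclideanSpace ℝ (Fin d) →L[ℝ] EuclideanSpace ℝ (Fin d),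
      ((auxB _).comp (T.comp (ContinuousLinearMap.id ℝ _) -
        (L / 2) • D.comp (ContinuousLinearMap.id ℝ _))) v v
        = ⟪v, T v⟫ - (L / 2) * ⟪D v, v⟫ := by
      intro D
      simp [auxB_apply, inner_smul_left, real_inner_comm]
    rw [e]
    have b1 : ⟪auxD (x - x₀) v, v⟫ ≤ 2 * ‖x - x₀‖ * ‖v‖ * ‖v‖ :=
      (real_inner_le_norm _ _).trans (mul_le_mul_of_nonneg_right
        ((auxD (x - x₀)).le_of_opNorm_le (auxD_norm _) v) (norm_nonneg _))
    have b2 : ‖v‖ ^ 2 ≤ R ^ 2 * N v ^ 2 := by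
      rw [← mul_pow]; exact pow_le_pow_left₀ (norm_nonneg _) (hNR v) 2
    have b3 : ‖x - x₀‖ * ‖v‖ ^ 2 ≤ α / (2 * R ^ 2 * L) * (R ^ 2 * N v ^ 2) := by
      gcongr
    have b4 : L * (α / (2 * R ^ 2 * L) * (R ^ 2 * N v ^ 2)) = α / 2 * N v ^ 2 := by
      field_simp
    have b5 := mul_le_mul_of_nonneg_left b3 hL.le
    have b6 := mul_le_mul_of_nonneg_left b1 (half_pos hL).le
    have := hAN v
    nlinarith
end

section
/- Let 𝒳, ℒ ⊆ ℝ^d be bounded symmetric convex sets with 0 in their interiors, with gauge norms ‖·‖_{𝒳^c} (of the dual set of 𝒳) and ‖·‖_ℒ. Suppose D > 0 is such that for every n ∈ ℕ, every x₀ ∈ ℝ^d and every predictable sequence x₁, …, x_n, with ε uniform on {−1,1}^n: E_ε‖x₀ + Σ_{i=1}^n ε_i x_i(ε)‖_{𝒳^c} ≤ D·(n+1)^{1/2}·max(‖x₀‖_ℒ, max_{1≤i≤n} max_ε ‖x_i(ε)‖_ℒ). Then there is a universal constant K (independent of d, 𝒳, ℒ, D, n) such that for every n, every x₀, and every predictable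 sequence x₁, …, x_n: E_ε‖x₀ + Σ_{i=1}^n ε_i x_i(ε)‖_{𝒳^c} ≤ K·D·max_ε (‖x₀‖_ℒ² + Σ_{i=1}^n ‖x_i(ε)‖_ℒ²)^{1/2}. -/
open RealInnerProductSpace

/-- The dual set `C^c = {x : ⟨x,y⟩ ≤ 1 for all y ∈ C}` of a set `C ⊆ ℝ^d`. -/
def dualSet {d : ℕ} (C : Set (EuclideanSpace ℝ (Fin d))) : Set (EuclideanSpace ℝ (Fin d)) :=
  {x | ∀ y ∈ C, ⟪x, y⟫ ≤ 1}

/-- The real sign `±1` associated to a boolean coordinate of a Rademacher vector. -/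
def signv (b : Bool) : ℝ := if b then 1 else -1

set_option linter.all false

theorem sub1 (f : ℝ → ℝ) (hf : ConvexOn ℝ Set.univ f) (c : ℝ) : ∃ σ, ∀ s, f c + σ * (s - c) ≤ f s := by
  refine ⟨sSup ((fun s => (f c - f s) / (c - s)) '' Set.Iio c), fun s => ?_⟩
  have key : ∀ a b, a < c → c < b → (f c - f a) / (c - a) ≤ (f b - f c) / (b - c) := fun a b ha hb =>
    hf.slope_mono_adjacent (Set.mem_univ _) (Set.mem_univ _) ha hb
  rcases lt_trichotomy s c with h | h | h
  · have h1 : (f c - f s) / (c - s) ≤ sSup ((fun s => (f c - f s) / (c - s)) '' Set.Iio c) := by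
      apply le_csSup
      · refine ⟨(f (c+1) - f c) / (c + 1 - c), ?_⟩
        rintro _ ⟨a, ha, rfl⟩
        exact key a (c+1) ha (by linarith)
      · exact ⟨s, h, rfl⟩
    rw [div_le_iff₀ (by linarith)] at h1
    linarith
  · subst h; simp
  · have h1 : sSup ((fun s => (f c - f s) / (c - s)) '' Set.Iio c) ≤ (f s - f c) / (s - c) := by
      apply csSup_le
      · exact ⟨_, c - 1, by simp, rfl⟩
      · rintro _ ⟨a, ha, rfl⟩
        exact key a s ha h
    rw [le_div_iff₀ (by linarith)] at h1
    linarith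

theorem oneD (f : ℕ → ℝ → ℝ) (hf : ConvexOn ℝ Set.univ (f 0)) (he : ∀ s, f 0 (-s) = f 0 s)
    (hs : ∀ k s, (f k (s+1) + f k (s-1)) / 2 ≤ f (k+1) s) (m : ℕ) (hm : 1 ≤ m) :
    f 0 (Real.sqrt m / 2) ≤ f m 0 := by
  obtain ⟨σ, hσ⟩ := sub1 _ hf (Real.sqrt m / 2)
  set w := Real.sqrt m with hw
  have hm' : (1:ℝ) ≤ m := by exact_mod_cast hm
  have hw2 : w ^ 2 = m := Real.sq_sqrt (by positivity)
  have hw0 : 0 < w := Real.sqrt_pos.2 (by linarith)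
  have hσ0 : 0 ≤ σ := by
    have h1 := hσ (-(w/2))
    rw [he] at h1
    nlinarith
  have habs : ∀ s, f 0 (w/2) + σ * (|s| - w/2) ≤ f 0 s := by
    intro s
    rcases abs_cases s with ⟨h, _⟩ | ⟨h, _⟩
    · rw [h]; exact hσ s
    · rw [h, ← he s]; exact hσ (-s)
  have hpt : ∀ u : ℝ, 0 ≤ u → u^2 - u^4/6 ≤ u := by
    intro u hu
    have : 0 ≤ 1 - u + u^3/6 := by nlinarith [mul_nonneg (by linarith : 0 ≤ u + 3) (sq_nonneg (u - 7/5)), sq_nonneg (u-7/5)]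
    nlinarith [mul_nonneg hu this]
  have hpt2 : ∀ s : ℝ, s^2 / w - s^4 / (6 * w^3) ≤ |s| := by
    intro s
    have h := hpt (|s| / w) (by positivity)
    have e : s^2 / w - s^4 / (6 * w^3) = w * ((|s|/w)^2 - (|s|/w)^4/6) := by
      rw [div_pow, div_pow, sq_abs, show |s|^4 = s^4 from Even.pow_abs (by decide) s]
      field_simp
    rw [e]
    calc _ ≤ w * (|s|/w) := by gcongr
      _ = |s| := by field_simp
  have ind : ∀ (k : ℕ) (s : ℝ), f 0 (w/2) + σ * ((s^2 + k) / w - (s^4 + 6*k*s^2 + 3*k^2 - 2*k) / (6*w^3) - w/2) ≤ f k s := by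
    intro k
    induction k with
    | zero =>
      intro s
      refine le_trans ?_ (habs s)
      have := hpt2 s
      have h2 := mul_le_mul_of_nonneg_left this hσ0
      simp only [Nat.cast_zero]
      ring_nf at h2 ⊢
      linarith
    | succ k ih =>
      intro s
      refine le_trans (le_trans (le_of_eq ?_) (div_le_div_of_nonneg_right (add_le_add (ih (s+1)) (ih (s-1))) zero_le_two)) (hs k s)
      push_cast
      ring
  refine le_trans ?_ (ind m 0)
  have : 0 ≤ ((0^2 + (m:ℝ)) / w - (0^4 + 6*m*0^2 + 3*m^2 - 2*m) / (6*w^3) - w/2) := by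
    rw [← hw2]
    have : ((0^2 + (w^2)) / w - (0^4 + 6*w^2*0^2 + 3*(w^2)^2 - 2*w^2) / (6*w^3) - w/2) = 1 / (3 * w) := by
      field_simp; ring
    rw [this]; positivity
  nlinarith [mul_nonneg hσ0 this]

section
variable {E : Type*} [AddCommGroup E] [Module ℝ E]

def PredS {n : ℕ} (x : Fin n → (Fin n → Bool) → E) : Prop :=
  ∀ (i : Fin n) (ε ε' : Fin n → Bool), (∀ j : Fin n, j < i → ε j = ε' j) → x i ε = x i ε'

noncomputable def Ev (p : E → ℝ) {n : ℕ} (v : E) (x : Fin n → (Fin n → Bool) → E) : ℝ :=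
  (∑ ε : Fin n → Bool, p (v + ∑ i : Fin n, signv (ε i) • x i ε)) / 2 ^ n

def Adm (q : E → ℝ) (r : ℝ) (n : ℕ) : Set (Fin n → (Fin n → Bool) → E) :=
  {x | PredS x ∧ ∀ i ε, q (x i ε) ≤ r}

noncomputable def VV (p q : E → ℝ) (r : ℝ) (n : ℕ) (v : E) : ℝ :=
  ⨆ x : Adm q r n, Ev p v x.1

theorem sum_cons {n : ℕ} (F : (Fin (n+1) → Bool) → ℝ) :
    ∑ ε, F ε = ∑ ε : Fin n → Bool, F (Fin.cons true ε) + ∑ ε : Fin n → Bool, F (Fin.cons false ε) := by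
  rw [← (Fin.consEquiv (fun _ : Fin (n+1) => Bool)).sum_comp, Fintype.sum_prod_type]
  simp [Fin.consEquiv]

theorem Ev_succ (p : E → ℝ) {n : ℕ} (v : E) (x : Fin (n+1) → (Fin (n+1) → Bool) → E) (y : E)
    (hy : ∀ ε, x 0 ε = y) :
    Ev p v x = (Ev p (v + y) (fun i ε => x i.succ (Fin.cons true ε))
      + Ev p (v - y) (fun i ε => x i.succ (Fin.cons false ε))) / 2 := by
  unfold Ev
  rw [sum_cons]
  simp only [Fin.sum_univ_succ, hy, Fin.cons_zero, Fin.cons_succ, signv, if_true]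
  simp only [one_smul, Bool.false_eq_true, if_false, neg_smul, pow_succ, sub_eq_add_neg, add_assoc]
  field_simp

theorem pred_tail {n : ℕ} {x : Fin (n+1) → (Fin (n+1) → Bool) → E} (hx : PredS x) (b : Bool) :
    PredS (fun (i : Fin n) ε => x i.succ (Fin.cons b ε)) := by
  intro i ε ε' h
  apply hx
  intro j hj
  refine Fin.cases (fun _ => ?_) (fun j hj => ?_) j hj
  · simp
  · simpa using h j (by simpa using hj)

def glue {n : ℕ} (y : E) (a b : Fin n → (Fin n → Bool) → E) : Fin (n+1) → (Fin (n+1) → Bool) → E :=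
  fun i ε => Fin.cases (motive := fun _ => E) y (fun j => if ε 0 then a j (Fin.tail ε) else b j (Fin.tail ε)) i

theorem glue_adm {q : E → ℝ} {r : ℝ} {n : ℕ} {y : E} {a b : Fin n → (Fin n → Bool) → E}
    (hy : q y ≤ r) (ha : a ∈ Adm q r n) (hb : b ∈ Adm q r n) : glue y a b ∈ Adm q r (n+1) := by
  constructor
  · intro i
    refine Fin.cases ?_ (fun i => ?_) i
    · intros; rfl
    · intro ε ε' h
      have h0 := h 0 (Fin.succ_pos _)
      have ht : ∀ j : Fin n, j < i → Fin.tail ε j = Fin.tail ε' j := fun j hj => h j.succ (by simpa using hj)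
      simp only [glue, Fin.cases_succ, h0, ha.1 i _ _ ht, hb.1 i _ _ ht]
  · intro i
    refine Fin.cases ?_ (fun i => ?_) i
    · intro ε; exact hy
    · intro ε
      simp only [glue, Fin.cases_succ]
      split_ifs
      · exact ha.2 _ _
      · exact hb.2 _ _

variable {p q : E → ℝ} {r D : ℝ}

theorem Ev_le (hadd : ∀ v w, p (v + w) ≤ p v + p w) {N : ℕ} (v : E)
    (x : Fin N → (Fin N → Bool) → E) : Ev p v x ≤ p v + Ev p 0 x := by
  simp only [Ev]
  have : ∑ ε : Fin N → Bool, p (v + ∑ i : Fin N, signv (ε i) • x i ε) ≤ 2 ^ N * p v +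
      ∑ ε : Fin N → Bool, p (0 + ∑ i : Fin N, signv (ε i) • x i ε) := by
    calc _ ≤ ∑ ε : Fin N → Bool, (p v + p (0 + ∑ i : Fin N, signv (ε i) • x i ε)) := by
          gcongr; rw [zero_add]; exact hadd _ _
      _ = _ := by rw [Finset.sum_add_distrib]; simp
  rw [div_le_iff₀ (by positivity), add_mul, div_mul_cancel₀ _ (by positivity)]
  linarith

theorem bdd (hadd : ∀ v w, p (v + w) ≤ p v + p w) {N : ℕ} {c : ℝ}
    (hH : ∀ x ∈ Adm q r N, Ev p 0 x ≤ c) (v : E) :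
    BddAbove (Set.range (fun x : Adm q r N => Ev p v x.1)) := by
  refine ⟨p v + c, ?_⟩
  rintro _ ⟨⟨x, hx⟩, rfl⟩
  have h1 := hH x hx
  have h2 := Ev_le hadd v x
  simp only
  linarith

theorem zero_adm (hq0 : q 0 ≤ r) (N : ℕ) : (0 : Fin N → (Fin N → Bool) → E) ∈ Adm q r N :=
  ⟨fun _ _ _ _ => rfl, fun _ _ => hq0⟩

theorem Ev_zero (N : ℕ) (v : E) : Ev p v (0 : Fin N → (Fin N → Bool) → E) = p v := by
  simp [Ev]

theorem VV_step (hq0 : q 0 ≤ r) (hb : ∀ N v, BddAbove (Set.range (fun x : Adm q r N => Ev p v x.1)))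
    (N : ℕ) (v y : E) (hy : q y ≤ r) :
    (VV p q r N (v + y) + VV p q r N (v - y)) / 2 ≤ VV p q r (N+1) v := by
  have : Nonempty (Adm q r N) := ⟨⟨0, zero_adm hq0 N⟩⟩
  have h : ∀ a b : Adm q r N, Ev p (v+y) a.1 + Ev p (v-y) b.1 ≤ 2 * VV p q r (N+1) v := by
    intro a b
    have h1 := le_ciSup (hb (N+1) v) ⟨glue y a.1 b.1, glue_adm hy a.2 b.2⟩
    have h2 := Ev_succ p v (glue y a.1 b.1) y (fun _ => rfl)
    simp only [glue, Fin.cases_succ, Fin.cons_zero, Fin.tail_cons, if_true, Bool.false_eq_true, if_false] at h2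
    change Ev p v (glue y a.1 b.1) ≤ VV p q r (N+1) v at h1
    change Ev p v (glue y a.1 b.1) = (Ev p (v+y) a.1 + Ev p (v-y) b.1) / 2 at h2
    linarith
  have h1 : VV p q r N (v + y) ≤ 2 * VV p q r (N+1) v - VV p q r N (v - y) := by
    apply ciSup_le
    intro a
    have : VV p q r N (v - y) ≤ 2 * VV p q r (N+1) v - Ev p (v+y) a.1 := by
      apply ciSup_le
      intro b
      linarith [h a b]
    linarith
  linarith

theorem VV_conv (hq0 : q 0 ≤ r) (hp : ConvexOn ℝ Set.univ p)
    (hb : ∀ N v, BddAbove (Set.range (fun x : Adm q r N => Ev p v x.1))) (N : ℕ) :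
    ConvexOn ℝ Set.univ (VV p q r N) := by
  have : Nonempty (Adm q r N) := ⟨⟨0, zero_adm hq0 N⟩⟩
  refine ⟨convex_univ, fun u _ w _ a b ha hb' hab => ?_⟩
  apply ciSup_le
  intro x
  have h1 := le_ciSup (hb N u) x
  have h2 := le_ciSup (hb N w) x
  change _ ≤ VV p q r N u at h1
  change _ ≤ VV p q r N w at h2
  have : Ev p (a • u + b • w) x.1 ≤ a * Ev p u x.1 + b * Ev p w x.1 := by
    unfold Ev
    rw [← mul_div_assoc, ← mul_div_assoc, ← add_div, Finset.mul_sum, Finset.mul_sum, ← Finset.sum_add_distrib]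
    gcongr with ε
    set z := ∑ i : Fin N, signv (ε i) • x.1 i ε
    have := hp.2 (Set.mem_univ (u + z)) (Set.mem_univ (w + z)) ha hb' hab
    have e : a • (u + z) + b • (w + z) = a • u + b • w + z := by
      rw [smul_add, smul_add, add_add_add_comm, ← add_smul a b z, hab, one_smul]
    rw [e] at this
    simpa using this
  simp only [smul_eq_mul]
  calc _ ≤ _ := this
    _ ≤ _ := by gcongr

theorem VV_key (hq0 : q 0 ≤ r) (hp : ConvexOn ℝ Set.univ p)
    (hqs : ∀ (t : ℝ) v, 0 ≤ t → q (t • v) = t * q v)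
    (hb : ∀ N v, BddAbove (Set.range (fun x : Adm q r N => Ev p v x.1)))
    (N m : ℕ) (hm : 1 ≤ m) (v y : E) (hy : q y ≤ r * Real.sqrt m) :
    (VV p q r N (v + (1/2 : ℝ) • y) + VV p q r N (v - (1/2 : ℝ) • y)) / 2 ≤ VV p q r (N+m) v := by
  have hm' : (1:ℝ) ≤ m := by exact_mod_cast hm
  have hw0 : 0 < Real.sqrt m := Real.sqrt_pos.2 (by linarith)
  set w := Real.sqrt m with hw
  set z := w⁻¹ • y with hz
  have hqz : q z ≤ r := by
    rw [hz, hqs _ _ (by positivity), inv_mul_le_iff₀ hw0]; linarith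
  have hc := VV_conv hq0 hp hb N
  have := oneD (fun k s => VV p q r (N+k) (v + s • z) + VV p q r (N+k) (v + (-s) • z)) ?_ ?_ ?_ m hm
  · simp only [add_zero, neg_zero, zero_smul] at this
    have e : (w / 2) • z = (1/2:ℝ) • y := by
      rw [hz, smul_smul]; congr 1; field_simp
    rw [← hw, neg_smul, e, ← sub_eq_add_neg] at this
    linarith
  · refine ⟨convex_univ, fun s _ t _ a b ha hb' hab => ?_⟩
    have h1 := hc.2 (Set.mem_univ (v + s • z)) (Set.mem_univ (v + t • z)) ha hb' hab
    have h2 := hc.2 (Set.mem_univ (v + (-s) • z)) (Set.mem_univ (v + (-t) • z)) ha hb' hab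
    have e : ∀ s t : ℝ, a • (v + s • z) + b • (v + t • z) = v + (a * s + b * t) • z := by
      intro s t
      obtain rfl : b = 1 - a := by linarith
      module
    rw [e] at h1 h2
    simp only [smul_eq_mul, add_zero] at h1 h2 ⊢
    rw [show -(a * s + b * t) = a * -s + b * -t by ring]
    linarith
  · intro s; simp only [neg_neg]; rw [add_comm]
  · intro k s
    have h1 := VV_step hq0 hb (N+k) (v + s • z) z hqz
    have h2 := VV_step hq0 hb (N+k) (v + (-s) • z) z hqz
    rw [show v + s • z + z = v + (s+1) • z by module, show v + s • z - z = v + (s-1) • z by module] at h1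
    rw [show v + (-s) • z + z = v + (-(s-1)) • z by module, show v + (-s) • z - z = v + (-(s+1)) • z by module] at h2
    simp only [← add_assoc]
    linarith

theorem VV_main (hr : 0 < r) (hq0 : q 0 = 0) (hqn : ∀ v, 0 ≤ q v) (hp : ConvexOn ℝ Set.univ p)
    (hqs : ∀ (t : ℝ) v, 0 ≤ t → q (t • v) = t * q v)
    (hb : ∀ N v, BddAbove (Set.range (fun x : Adm q r N => Ev p v x.1)))
    (n : ℕ) : ∀ (N : ℕ) (v : E) (x : Fin n → (Fin n → Bool) → E), PredS x →
      (∀ ε, ∑ i, (⌊q (x i ε) ^ 2 / r ^ 2⌋₊ + 1) ≤ N) →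
      Ev p v (fun i ε => (1/2 : ℝ) • x i ε) ≤ VV p q r N v := by
  have hq0' : q 0 ≤ r := by rw [hq0]; exact hr.le
  induction n with
  | zero =>
    intro N v x _ _
    have h1 := le_ciSup (hb N v) ⟨0, zero_adm hq0' N⟩
    simp only [Ev_zero] at h1
    refine le_trans (le_of_eq ?_) h1
    simp [Ev]
  | succ n ih =>
    intro N v x hx hN
    set y := x 0 (fun _ => true) with hy
    have hxy : ∀ ε, x 0 ε = y := fun ε => hx 0 _ _ (fun j hj => absurd hj (Fin.not_lt_zero _))
    set m := ⌊q y ^ 2 / r ^ 2⌋₊ + 1 with hm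
    simp only [Fin.sum_univ_succ, hxy, ← hm] at hN
    obtain ⟨N', rfl⟩ : ∃ N', N = N' + m := ⟨N - m, by have := hN (fun _ => true); omega⟩
    rw [Ev_succ p v _ ((1/2:ℝ) • y) (fun ε => by rw [hxy])]
    have hk := VV_key hq0' hp hqs hb N' m (by omega) v y ?_
    · have h1 := ih N' (v + (1/2:ℝ) • y) _ (pred_tail hx true) (fun ε => by have := hN (Fin.cons true ε); omega)
      have h2 := ih N' (v - (1/2:ℝ) • y) _ (pred_tail hx false) (fun ε => by have := hN (Fin.cons false ε); omega)
      linarith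
    · have h1 : q y ^ 2 / r ^ 2 < m := by rw [hm]; push_cast; exact Nat.lt_floor_add_one _
      rw [div_lt_iff₀ (by positivity)] at h1
      refine (sq_le_sq₀ (hqn y) (by positivity)).1 ?_
      rw [mul_pow, Real.sq_sqrt (by positivity)]; linarith
end

/-- improving the martingale type for `p = 2`. There is a universal
constant `K` such that: whenever bounded symmetric convex bodies `𝒳, ℒ ⊆ ℝ^d` and `D > 0`
satisfy, for every predictable sequence,
`E‖x₀ + Σ εᵢ xᵢ(ε)‖_{𝒳^c} ≤ D√(n+1)·max(‖x₀‖_ℒ, maxᵢ max_ε ‖xᵢ(ε)‖_ℒ)`,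
then for every predictable sequence,
`E‖x₀ + Σ εᵢ xᵢ(ε)‖_{𝒳^c} ≤ K·D·max_ε (‖x₀‖_ℒ² + Σᵢ ‖xᵢ(ε)‖_ℒ²)^{1/2}`. -/
theorem stmt10 :
    ∃ K : ℝ, 0 < K ∧
      ∀ (d : ℕ) (𝒳 ℒ : Set (EuclideanSpace ℝ (Fin d))) (D : ℝ),
        Convex ℝ 𝒳 → (∀ x ∈ 𝒳, -x ∈ 𝒳) → Bornology.IsBounded 𝒳 →
          (0 : EuclideanSpace ℝ (Fin d)) ∈ interior 𝒳 →
        Convex ℝ ℒ → (∀ x ∈ ℒ, -x ∈ ℒ) → Bornology.IsBounded ℒ →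
          (0 : EuclideanSpace ℝ (Fin d)) ∈ interior ℒ →
        0 < D →
        (∀ (n : ℕ) (x₀ : EuclideanSpace ℝ (Fin d))
            (x : Fin n → (Fin n → Bool) → EuclideanSpace ℝ (Fin d)),
          (∀ (i : Fin n) (ε ε' : Fin n → Bool), (∀ j : Fin n, j < i → ε j = ε' j) →
            x i ε = x i ε') →
          (∑ ε : Fin n → Bool,
              gauge (dualSet 𝒳) (x₀ + ∑ i : Fin n, signv (ε i) • x i ε)) / 2 ^ n
            ≤ D * Real.sqrt (n + 1) *
                max (gauge ℒ x₀) (⨆ i : Fin n, ⨆ ε : Fin n → Bool, gauge ℒ (x i ε))) →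
        ∀ (n : ℕ) (x₀ : EuclideanSpace ℝ (Fin d))
            (x : Fin n → (Fin n → Bool) → EuclideanSpace ℝ (Fin d)),
          (∀ (i : Fin n) (ε ε' : Fin n → Bool), (∀ j : Fin n, j < i → ε j = ε' j) →
            x i ε = x i ε') →
          (∑ ε : Fin n → Bool,
              gauge (dualSet 𝒳) (x₀ + ∑ i : Fin n, signv (ε i) • x i ε)) / 2 ^ n
            ≤ K * D * ⨆ ε : Fin n → Bool,
                Real.sqrt (gauge ℒ x₀ ^ 2 + ∑ i : Fin n, gauge ℒ (x i ε) ^ 2) := by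
  refine ⟨4, by norm_num, ?_⟩
  intro d 𝒳 ℒ D _ _ hXb _ _ _ _ _ hD H n x₀ x hx
  have hcv : Convex ℝ (dualSet 𝒳) := by
    intro u hu w hw a b ha hb hab y hy
    rw [inner_add_left, real_inner_smul_left, real_inner_smul_left]
    nlinarith [mul_le_mul_of_nonneg_left (hu y hy) ha, mul_le_mul_of_nonneg_left (hw y hy) hb]
  have habs : Absorbent ℝ (dualSet 𝒳) := by
    apply absorbent_nhds_zero
    obtain ⟨R, hR0, hR⟩ := hXb.exists_pos_norm_le
    refine Metric.mem_nhds_iff.2 ⟨R⁻¹, by positivity, fun u hu y hy => ?_⟩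
    rw [mem_ball_zero_iff] at hu
    calc ⟪u, y⟫ ≤ ‖u‖ * ‖y‖ := real_inner_le_norm _ _
      _ ≤ R⁻¹ * R := by gcongr; exact hR y hy
      _ = 1 := inv_mul_cancel₀ hR0.ne'
  set p : EuclideanSpace ℝ (Fin d) → ℝ := gauge (dualSet 𝒳) with hpdef
  set q : EuclideanSpace ℝ (Fin d) → ℝ := gauge ℒ with hqdef
  have hadd : ∀ v w, p (v + w) ≤ p v + p w := gauge_add_le hcv habs
  have hps : ∀ (t : ℝ) v, 0 ≤ t → p (t • v) = t * p v := fun t v ht => gauge_smul_of_nonneg ht v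
  have hqs : ∀ (t : ℝ) v, 0 ≤ t → q (t • v) = t * q v := fun t v ht => gauge_smul_of_nonneg ht v
  have hq0 : q 0 = 0 := gauge_zero
  have hqn : ∀ v, 0 ≤ q v := gauge_nonneg
  have hp : ConvexOn ℝ Set.univ p := by
    refine ⟨convex_univ, fun u _ w _ a b ha hb _ => ?_⟩
    refine (hadd _ _).trans ?_
    rw [hps _ _ ha, hps _ _ hb]; rfl
  -- the hypothesis at bounded steps
  have H1 : ∀ (r : ℝ), 0 < r → ∀ N, ∀ z ∈ Adm q r N, Ev p 0 z ≤ D * Real.sqrt (N + 1) * r := by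
    intro r hr N z hz
    refine (H N 0 z hz.1).trans ?_
    gcongr
    refine max_le (by rw [hq0]; exact hr.le) ?_
    exact Real.iSup_le (fun i => Real.iSup_le (fun ε => hz.2 i ε) hr.le) hr.le
  have H0 : ∀ v, p v ≤ D * q v := by
    intro v
    have := H 0 v (fun _ _ => 0) (fun _ _ _ _ => rfl)
    simpa [hqn v] using this
  set B := ⨆ ε : Fin n → Bool, Real.sqrt (q x₀ ^ 2 + ∑ i : Fin n, q (x i ε) ^ 2) with hB
  have hBle : ∀ ε, Real.sqrt (q x₀ ^ 2 + ∑ i : Fin n, q (x i ε) ^ 2) ≤ B := fun ε =>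
    le_ciSup (f := fun ε => Real.sqrt (q x₀ ^ 2 + ∑ i : Fin n, q (x i ε) ^ 2))
      (Set.finite_range _).bddAbove ε
  have hB0 : 0 ≤ B := Real.iSup_nonneg (fun _ => Real.sqrt_nonneg _)
  have main : ∀ B' > B, Ev p x₀ x ≤ 4 * D * B' := by
    intro B' hB'
    have hB'0 : 0 < B' := lt_of_le_of_lt hB0 hB'
    have hsq : ∀ ε, q x₀ ^ 2 + ∑ i : Fin n, q (x i ε) ^ 2 ≤ B' ^ 2 := fun ε =>
      (Real.sqrt_le_left hB'0.le).1 ((hBle ε).trans hB'.le)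
    have hx0 : q x₀ ≤ B' := by
      refine (sq_le_sq₀ (hqn _) hB'0.le).1 ?_
      have h1 := hsq (fun _ => true)
      have h2 : 0 ≤ ∑ i : Fin n, q (x i (fun _ => true)) ^ 2 := Finset.sum_nonneg (fun _ _ => sq_nonneg _)
      linarith
    set w := Real.sqrt (n + 1) with hw
    have hw2 : w ^ 2 = n + 1 := Real.sq_sqrt (by positivity)
    have hw0 : 0 < w := Real.sqrt_pos.2 (by positivity)
    set r := B' / w with hrdef
    have hr : 0 < r := by positivity
    have hb : ∀ N v, BddAbove (Set.range (fun z : Adm q r N => Ev p v z.1)) :=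
      fun N v => bdd hadd (H1 r hr N) v
    have hmain := VV_main hr hq0 hqn hp hqs hb n (2 * n + 1) 0 x hx ?_
    · have hV : VV p q r (2*n+1) 0 ≤ D * Real.sqrt ((2*n+1 : ℕ) + 1) * r := by
        have : Nonempty (Adm q r (2*n+1)) := ⟨⟨0, zero_adm (by rw [hq0]; exact hr.le) _⟩⟩
        exact ciSup_le (fun z => H1 r hr _ z.1 z.2)
      have e1 : Real.sqrt ((2*n+1 : ℕ) + 1) = Real.sqrt 2 * w := by
        rw [hw, ← Real.sqrt_mul (by norm_num)]; congr 1; push_cast; ring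
      have e2 : D * Real.sqrt ((2*n+1 : ℕ) + 1) * r = D * Real.sqrt 2 * B' := by
        rw [e1, hrdef]; field_simp
      have hs2 : Real.sqrt 2 ≤ 3/2 := by
        rw [Real.sqrt_le_left (by norm_num)]; norm_num
      have e3 : Ev p 0 (fun i ε => (1/2 : ℝ) • x i ε) = 1/2 * Ev p 0 x := by
        unfold Ev
        rw [← mul_div_assoc, Finset.mul_sum]
        congr 1
        refine Finset.sum_congr rfl (fun ε _ => ?_)
        rw [← hps _ _ (by norm_num), zero_add, zero_add, Finset.smul_sum]
        congr 1
        exact Finset.sum_congr rfl (fun i _ => smul_comm _ _ _)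
      have h0 : Ev p x₀ x ≤ p x₀ + Ev p 0 x := Ev_le hadd x₀ x
      have h5 := H0 x₀
      have h6 : D * q x₀ ≤ D * B' := by gcongr
      have h7 : D * Real.sqrt 2 * B' ≤ D * (3/2) * B' := by gcongr
      rw [e3] at hmain
      rw [e2] at hV
      linarith
    · intro ε
      have h1 : ((∑ i, (⌊q (x i ε) ^ 2 / r ^ 2⌋₊ + 1) : ℕ) : ℝ) ≤ ((2 * n + 1 : ℕ) : ℝ) := by
        push_cast
        calc ∑ i, ((⌊q (x i ε) ^ 2 / r ^ 2⌋₊ : ℝ) + 1) ≤ ∑ i, (q (x i ε) ^ 2 / r ^ 2 + 1) := by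
              gcongr; exact Nat.floor_le (by positivity)
          _ = (∑ i, q (x i ε) ^ 2) / r ^ 2 + n := by
              rw [Finset.sum_add_distrib, Finset.sum_div]; simp
          _ ≤ B' ^ 2 / r ^ 2 + n := by
              gcongr
              have := hsq ε
              nlinarith [sq_nonneg (q x₀)]
          _ = 2 * n + 1 := by
              have : B' ^ 2 / r ^ 2 = w ^ 2 := by rw [hrdef]; field_simp
              rw [this, hw2]; ring
      exact_mod_cast h1
  change Ev p x₀ x ≤ 4 * D * B
  have h4 : Ev p x₀ x / (4 * D) ≤ B := by
    refine le_of_forall_gt_imp_ge_of_dense (fun B' hB' => ?_)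
    rw [div_le_iff₀ (by positivity)]
    linarith [main B' hB']
  rw [div_le_iff₀ (by positivity)] at h4
  linarith
end

section
/- Let 𝒳, ℒ ⊆ ℝ^d be symmetric convex sets with B(0, r) ⊆ 𝒳, ℒ ⊆ B(0, R) for some 0 < r ≤ R. Suppose C > 0 is such that for every n ∈ ℕ, every x₀ ∈ ℝ^d, and every predictable sequence x₁, …, x_n, with ε uniform on {−1,1}^n: E_ε‖x₀ + Σ_{i=1}^n ε_i x_i(ε)‖_{𝒳^c}² ≤ C²·(‖x₀‖_ℒ² + Σ_{i=1}^n E_ε‖x_i(ε)‖_ℒ²). Then there exists a nonnegative convex 2-homogeneous function f₀ : ℝ^d → ℝ such that: (i) f₀ is 1-strongly convex with respect to the norm ‖·‖_{ℒ^c}; (ii) (1/2)‖x‖_{ℒ^c}² ≤ f₀(x) ≤ (C²/2)‖x‖_𝒳² for all x ∈ ℝ^d; and (iii) |f₀(x₁) − f₀(x₂)| ≤ C²·‖x₁ − x₂‖_𝒳·max(‖x₁‖_𝒳, ‖x₂‖_𝒳) for all x₁, x₂ ∈ ℝ^d. -/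
open RealInnerProductSpace

/-- Payoff functions of predictable strategies with `n` rounds. -/
def payoffs {E : Type*} [AddCommGroup E] (N G : E → ℝ) : ℕ → Set (E → ℝ)
  | 0 => {N}
  | n + 1 => {f | ∃ y : E, ∃ φ ∈ payoffs N G n, ∃ ψ ∈ payoffs N G n,
      f = fun x => (φ (x + y) + ψ (x - y)) / 2 - G y}

theorem payoffs_mono {E : Type*} [AddCommGroup E] (N G : E → ℝ) (hG : G 0 = 0) {n m : ℕ}
    (h : n ≤ m) : payoffs N G n ⊆ payoffs N G m := by
  induction h with
  | refl => exact subset_rfl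
  | step _ ih =>
    intro φ hφ
    refine ⟨0, φ, ih hφ, φ, ih hφ, ?_⟩
    funext x
    simp [hG]

theorem payoffs_scale {E : Type*} [AddCommGroup E] [Module ℝ E] (N G : E → ℝ)
    (hN : ∀ t : ℝ, 0 < t → ∀ x, N (t • x) = t ^ 2 * N x)
    (hG : ∀ t : ℝ, 0 < t → ∀ x, G (t • x) = t ^ 2 * G x) (t : ℝ) (ht : 0 < t) (n : ℕ) :
    ∀ φ ∈ payoffs N G n, (fun x => φ (t • x) / t ^ 2) ∈ payoffs N G n := by
  induction n with
  | zero =>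
    rintro φ rfl
    change _ = _
    funext x
    rw [hN t ht]
    field_simp
  | succ n ih =>
    rintro f ⟨y, φ, hφ, ψ, hψ, rfl⟩
    refine ⟨t⁻¹ • y, _, ih φ hφ, _, ih ψ hψ, ?_⟩
    funext x
    have h1 : t • t⁻¹ • y = y := smul_inv_smul₀ ht.ne' y
    have h2 : G y = t ^ 2 * G (t⁻¹ • y) := by rw [← hG t ht, h1]
    simp only [smul_add, smul_sub, h1, h2]
    field_simp

theorem sum_bool_cons {n : ℕ} (F : (Fin (n + 1) → Bool) → ℝ) :
    ∑ ε, F ε = ∑ ε, F (Fin.cons true ε) + ∑ ε, F (Fin.cons false ε) := by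
  rw [← Fintype.sum_equiv (Fin.consEquiv (fun _ => Bool)) (fun p => F (Fin.cons p.1 p.2)) F
    (fun p => rfl), Fintype.sum_prod_type, Fintype.sum_bool]

theorem payoffs_rep {d : ℕ} (a b : EuclideanSpace ℝ (Fin d) → ℝ) (c : ℝ) (n : ℕ) :
    ∀ φ ∈ payoffs a (fun y => c * b y) n,
      ∃ x : Fin n → (Fin n → Bool) → EuclideanSpace ℝ (Fin d),
      (∀ (i : Fin n) (ε ε' : Fin n → Bool), (∀ j : Fin n, j < i → ε j = ε' j) →
        x i ε = x i ε') ∧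
      ∀ x₀, φ x₀ = (∑ ε : Fin n → Bool, a (x₀ + ∑ i : Fin n, signv (ε i) • x i ε)) / 2 ^ n
        - c * ∑ i : Fin n, (∑ ε : Fin n → Bool, b (x i ε)) / 2 ^ n := by
  induction n with
  | zero =>
    rintro φ rfl
    refine ⟨fun i => i.elim0, fun i => i.elim0, fun x₀ => ?_⟩
    simp
  | succ n ih =>
    rintro f ⟨y, φ, hφ, ψ, hψ, rfl⟩
    obtain ⟨xL, hL, eL⟩ := ih φ hφ
    obtain ⟨xR, hR, eR⟩ := ih ψ hψ
    refine ⟨fun i ε => Fin.cases y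
      (fun j => if ε 0 then xL j (Fin.tail ε) else xR j (Fin.tail ε)) i, ?_, ?_⟩
    · intro i ε ε' h
      induction i using Fin.cases with
      | zero => rfl
      | succ j =>
        have h0 : ε 0 = ε' 0 := h 0 (Fin.succ_pos j)
        have ht : ∀ k : Fin n, k < j → Fin.tail ε k = Fin.tail ε' k :=
          fun k hk => h k.succ (Fin.succ_lt_succ_iff.2 hk)
        simp only [Fin.cases_succ, h0, hL j _ _ ht, hR j _ _ ht]
    · intro x₀
      simp only [eL, eR]
      rw [sum_bool_cons]
      simp only [Fin.sum_univ_succ, Fin.cases_zero, Fin.cases_succ, Fin.cons_zero, Fin.cons_succ,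
        Fin.tail_cons, sum_bool_cons (n := n) (fun ε => b (if ε 0 then _ else _)), if_true]
      simp only [signv, if_true, Bool.false_eq_true, if_false, one_smul, neg_smul, add_assoc,
        sub_eq_add_neg, Finset.sum_const, Finset.card_univ, Fintype.card_pi, Fintype.card_bool,
        Finset.prod_const, Fintype.card_fin, nsmul_eq_mul, add_div, Finset.sum_add_distrib]
      simp only [← Finset.sum_div]
      push_cast
      field_simp
      ring

section gaugeFacts

variable {d : ℕ}

theorem absorbent_of_ball {K : Set (EuclideanSpace ℝ (Fin d))} {r : ℝ} (hr : 0 < r)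
    (h : Metric.closedBall (0 : EuclideanSpace ℝ (Fin d)) r ⊆ K) : Absorbent ℝ K :=
  absorbent_nhds_zero (Filter.mem_of_superset (Metric.closedBall_mem_nhds _ hr) h)

theorem dual_ball {K : Set (EuclideanSpace ℝ (Fin d))} {R : ℝ} (hR : 0 < R)
    (h : K ⊆ Metric.closedBall (0 : EuclideanSpace ℝ (Fin d)) R) :
    Metric.closedBall (0 : EuclideanSpace ℝ (Fin d)) R⁻¹ ⊆ dualSet K := by
  intro x hx y hy
  have hx' : ‖x‖ ≤ R⁻¹ := by simpa using hx
  have hy' : ‖y‖ ≤ R := by simpa using h hy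
  calc ⟪x, y⟫ ≤ ‖x‖ * ‖y‖ := real_inner_le_norm x y
    _ ≤ R⁻¹ * R := by gcongr
    _ = 1 := inv_mul_cancel₀ hR.ne'

theorem inner_le_gauge {K : Set (EuclideanSpace ℝ (Fin d))} (hK : Absorbent ℝ K)
    (hD : Absorbent ℝ (dualSet K)) (x p : EuclideanSpace ℝ (Fin d)) :
    ⟪x, p⟫ ≤ gauge K x * gauge (dualSet K) p := by
  have key : ∀ η : ℝ, 0 < η → ⟪x, p⟫ ≤ (gauge K x + η) * (gauge (dualSet K) p + η) := by
    intro η hη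
    obtain ⟨a, ha, ha', u, hu, rfl⟩ := exists_lt_of_gauge_lt hK (lt_add_of_pos_right (gauge K x) hη)
    obtain ⟨b, hb, hb', v, hv, rfl⟩ :=
      exists_lt_of_gauge_lt hD (lt_add_of_pos_right (gauge (dualSet K) p) hη)
    have h1 : ⟪v, u⟫ ≤ 1 := hv u hu
    have h2 : ⟪a • u, b • v⟫ = (a * b) * ⟪v, u⟫ := by
      rw [real_inner_smul_left, real_inner_smul_right, real_inner_comm]; ring
    calc ⟪a • u, b • v⟫ = (a * b) * ⟪v, u⟫ := h2
      _ ≤ (a * b) * 1 := by gcongr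
      _ = a * b := mul_one _
      _ ≤ _ := mul_le_mul ha'.le hb'.le hb.le (ha.le.trans ha'.le)
  have hlim : Filter.Tendsto (fun η : ℝ => (gauge K x + η) * (gauge (dualSet K) p + η))
      (nhdsWithin 0 (Set.Ioi 0)) (nhds ((gauge K x + 0) * (gauge (dualSet K) p + 0))) := by
    apply tendsto_nhdsWithin_of_tendsto_nhds
    exact Continuous.tendsto (by fun_prop) 0
  rw [add_zero, add_zero] at hlim
  refine ge_of_tendsto hlim ?_
  filter_upwards [self_mem_nhdsWithin] with η hη using key η hη

theorem gauge_dual_sq_le {K : Set (EuclideanSpace ℝ (Fin d))}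
    (z : EuclideanSpace ℝ (Fin d)) (c : ℝ)
    (h : ∀ p, ⟪z, p⟫ - 1 / 2 * gauge K p ^ 2 ≤ c) :
    1 / 2 * gauge (dualSet K) z ^ 2 ≤ c := by
  have hc : 0 ≤ c := by simpa using h 0
  have h1 : ∀ p ∈ K, ⟪z, p⟫ ≤ √(2 * c) := by
    intro p hp
    by_cases hs : ⟪z, p⟫ ≤ 0
    · exact hs.trans (Real.sqrt_nonneg _)
    push Not at hs
    apply Real.le_sqrt_of_sq_le
    have h2 := h (⟪z, p⟫ • p)
    rw [gauge_smul_of_nonneg hs.le, real_inner_smul_right, smul_eq_mul] at h2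
    have h3 : gauge K p ≤ 1 := gauge_le_one_of_mem hp
    have h4 : (0 : ℝ) ≤ gauge K p := gauge_nonneg p
    have h5 : gauge K p ^ 2 ≤ 1 := by nlinarith
    nlinarith [mul_le_mul_of_nonneg_left h5 (sq_nonneg ⟪z, p⟫)]
  have h2 : gauge (dualSet K) z ≤ √(2 * c) := by
    refine le_of_forall_pos_le_add fun η hη => ?_
    have hpos : 0 < √(2 * c) + η := by positivity
    refine gauge_le_of_mem hpos.le ?_
    rw [Set.mem_smul_set_iff_inv_smul_mem₀ hpos.ne']
    intro p hp
    rw [real_inner_smul_left, inv_mul_le_iff₀ hpos]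
    linarith [h1 p hp]
  have h3 : gauge (dualSet K) z ^ 2 ≤ √(2 * c) ^ 2 := by
    gcongr
    exact gauge_nonneg z
  rw [Real.sq_sqrt (by positivity)] at h3
  linarith

end gaugeFacts

/-- Square-root triangle inequality for convex `2`-homogeneous functions. -/
theorem sqrt_triangle {E : Type*} [AddCommGroup E] [Module ℝ E] (f : E → ℝ)
    (hf0 : ∀ x, 0 ≤ f x) (hf : ConvexOn ℝ Set.univ f)
    (hh : ∀ t : ℝ, 0 ≤ t → ∀ y, f (t • y) = t ^ 2 * f y) (x y : E) :
    √(f (x + y)) ≤ √(f x) + √(f y) := by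
  have key : ∀ a b : ℝ, 0 < a → 0 < b → √(f x) ≤ a → √(f y) ≤ b → √(f (x + y)) ≤ a + b := by
    intro a b ha hb hxa hyb
    have hxa' : f x ≤ a ^ 2 := (Real.sqrt_le_left ha.le).1 hxa
    have hyb' : f y ≤ b ^ 2 := (Real.sqrt_le_left hb.le).1 hyb
    apply Real.sqrt_le_iff.2 ⟨by positivity, ?_⟩
    have h := hf.2 (Set.mem_univ (((a + b) / a) • x)) (Set.mem_univ (((a + b) / b) • y))
      (show 0 ≤ a / (a + b) by positivity) (show 0 ≤ b / (a + b) by positivity) (by field_simp)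
    rw [smul_smul, smul_smul, hh _ (by positivity), hh _ (by positivity)] at h
    have e1 : a / (a + b) * ((a + b) / a) = 1 := by field_simp
    have e2 : b / (a + b) * ((a + b) / b) = 1 := by field_simp
    rw [e1, e2, one_smul, one_smul, smul_eq_mul, smul_eq_mul] at h
    calc f (x + y) ≤ _ := h
      _ ≤ a / (a + b) * (((a + b) / a) ^ 2 * a ^ 2) + b / (a + b) * (((a + b) / b) ^ 2 * b ^ 2) := by
        gcongr
      _ = (a + b) ^ 2 := by field_simp
  refine le_of_forall_pos_le_add fun η hη => ?_
  have := key (√(f x) + η / 2) (√(f y) + η / 2) (by positivity) (by positivity)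
    (by linarith) (by linarith)
  linarith

/-- Midpoint strong convexity plus subgradient gives strong convexity. -/
theorem strong_of_midpoint {d : ℕ} (f K : EuclideanSpace ℝ (Fin d) → ℝ)
    (hK : ∀ t : ℝ, 0 ≤ t → ∀ y, K (t • y) = t * K y)
    (hmid : ∀ x y, f ((1 / 2 : ℝ) • (x + y)) + 1 / 8 * K (y - x) ^ 2 ≤ 1 / 2 * f x + 1 / 2 * f y)
    (x y g : EuclideanSpace ℝ (Fin d)) (hg : ∀ z, f x + ⟪g, z - x⟫ ≤ f z) :
    f x + ⟪g, y - x⟫ + (1 / 2) * K (y - x) ^ 2 ≤ f y := by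
  set D : ℝ := f y - f x - ⟪g, y - x⟫ with hD
  have step : ∀ k : ℕ, f (x + ((1 / 2 : ℝ) ^ k) • (y - x)) - f x - (1 / 2 : ℝ) ^ k * ⟪g, y - x⟫
      ≤ (1 / 2 : ℝ) ^ k * D - K (y - x) ^ 2 / 2 * ((1 / 2 : ℝ) ^ k - ((1 / 2 : ℝ) ^ k) ^ 2) := by
    intro k
    induction k with
    | zero => simp [hD]
    | succ k ih =>
      rw [pow_succ]
      set l : ℝ := (1 / 2 : ℝ) ^ k with hl
      have hl0 : 0 ≤ l := by positivity
      have h := hmid x (x + l • (y - x))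
      have e1 : (1 / 2 : ℝ) • (x + (x + l • (y - x))) = x + (l * (1 / 2)) • (y - x) := by
        module
      rw [e1, add_sub_cancel_left, hK l hl0] at h
      nlinarith
  have bound : ∀ k : ℕ, K (y - x) ^ 2 / 2 * (1 - (1 / 2 : ℝ) ^ k) ≤ D := by
    intro k
    have h1 := step k
    have h2 := hg (x + ((1 / 2 : ℝ) ^ k) • (y - x))
    rw [add_sub_cancel_left, real_inner_smul_right] at h2
    have hl0 : (0 : ℝ) < (1 / 2 : ℝ) ^ k := by positivity
    set l : ℝ := (1 / 2 : ℝ) ^ k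
    have h3 : l * (K (y - x) ^ 2 / 2 * (1 - l)) ≤ l * D := by nlinarith
    exact le_of_mul_le_mul_left h3 hl0
  have hlim : Filter.Tendsto (fun k : ℕ => K (y - x) ^ 2 / 2 * (1 - (1 / 2 : ℝ) ^ k))
      Filter.atTop (nhds (K (y - x) ^ 2 / 2 * (1 - 0))) :=
    ((tendsto_pow_atTop_nhds_zero_of_lt_one (by norm_num) (by norm_num)).const_sub 1).const_mul _
  have := le_of_tendsto' hlim bound
  rw [hD] at this
  linarith

/-- The smooth potential on the dual side. -/
theorem exists_potential {d : ℕ} (N L : EuclideanSpace ℝ (Fin d) → ℝ) (C : ℝ) (hC : 0 < C)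
    (hN0 : ∀ x, 0 ≤ N x)
    (hN : ∀ t : ℝ, 0 ≤ t → ∀ x, N (t • x) = t * N x)
    (hL : ∀ t : ℝ, 0 ≤ t → ∀ x, L (t • x) = t * L x)
    (hmg : ∀ (n : ℕ) (x₀ : EuclideanSpace ℝ (Fin d))
        (x : Fin n → (Fin n → Bool) → EuclideanSpace ℝ (Fin d)),
      (∀ (i : Fin n) (ε ε' : Fin n → Bool), (∀ j : Fin n, j < i → ε j = ε' j) →
        x i ε = x i ε') →
      (∑ ε : Fin n → Bool, N (x₀ + ∑ i : Fin n, signv (ε i) • x i ε) ^ 2) / 2 ^ n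
        ≤ C ^ 2 * (L x₀ ^ 2 +
            ∑ i : Fin n, (∑ ε : Fin n → Bool, L (x i ε) ^ 2) / 2 ^ n)) :
    ∃ W : EuclideanSpace ℝ (Fin d) → ℝ,
      (∀ x, N x ^ 2 / (2 * C ^ 2) ≤ W x) ∧ (∀ x, W x ≤ 1 / 2 * L x ^ 2) ∧
      (∀ t : ℝ, 0 < t → ∀ x, W (t • x) ≤ t ^ 2 * W x) ∧
      (∀ x y, W (x + y) + W (x - y) ≤ 2 * W x + L y ^ 2) := by
  have hL0 : L 0 = 0 := by simpa using hL 0 le_rfl 0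
  set P : ℕ → Set (EuclideanSpace ℝ (Fin d) → ℝ) :=
    payoffs (fun x => N x ^ 2) (fun y => C ^ 2 * L y ^ 2) with hP
  have hub : ∀ n, ∀ φ ∈ P n, ∀ x, φ x ≤ C ^ 2 * L x ^ 2 := by
    intro n φ hφ x
    obtain ⟨s, hs, e⟩ := payoffs_rep (fun x => N x ^ 2) (fun y => L y ^ 2) (C ^ 2) n φ hφ
    have := hmg n x s hs
    rw [e]
    linarith
  let ι := {φ : EuclideanSpace ℝ (Fin d) → ℝ // ∃ n, φ ∈ P n}
  have : Nonempty ι := ⟨⟨fun x => N x ^ 2, 0, rfl⟩⟩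
  let V : EuclideanSpace ℝ (Fin d) → ℝ := fun x => ⨆ φ : ι, φ.1 x
  have hbdd : ∀ x, BddAbove (Set.range fun φ : ι => φ.1 x) := by
    intro x
    refine ⟨C ^ 2 * L x ^ 2, ?_⟩
    rintro _ ⟨⟨φ, n, hφ⟩, rfl⟩
    exact hub n φ hφ x
  have hle : ∀ n, ∀ φ ∈ P n, ∀ x, φ x ≤ V x := fun n φ hφ x =>
    le_ciSup (hbdd x) (⟨φ, n, hφ⟩ : ι)
  have hC2 : 0 < 2 * C ^ 2 := by positivity
  refine ⟨fun x => V x / (2 * C ^ 2), ?_, ?_, ?_, ?_⟩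
  · intro x
    have : N x ^ 2 ≤ V x := hle 0 _ rfl x
    exact div_le_div_of_nonneg_right this hC2.le
  · intro x
    have : V x ≤ C ^ 2 * L x ^ 2 := ciSup_le fun φ => hub _ _ φ.2.choose_spec x
    rw [div_le_iff₀ hC2]
    linarith
  · intro t ht x
    have : V (t • x) ≤ t ^ 2 * V x := by
      refine ciSup_le ?_
      rintro ⟨φ, n, hφ⟩
      have h := hle n _ (payoffs_scale (fun x => N x ^ 2) (fun y => C ^ 2 * L y ^ 2)
        (fun t ht x => by simp only [hN t ht.le]; ring)
        (fun t ht x => by simp only [hL t ht.le]; ring) t ht n φ hφ) x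
      rw [div_le_iff₀ (by positivity)] at h
      linarith
    calc V (t • x) / (2 * C ^ 2) ≤ t ^ 2 * V x / (2 * C ^ 2) := by gcongr
      _ = _ := by ring
  · intro x y
    have h : V (x + y) + V (x - y) ≤ 2 * V x + 2 * C ^ 2 * L y ^ 2 := by
      have h1 : V (x + y) ≤ 2 * V x + 2 * C ^ 2 * L y ^ 2 - V (x - y) := by
        refine ciSup_le ?_
        rintro ⟨φ, n, hφ⟩
        have h2 : V (x - y) ≤ 2 * V x + 2 * C ^ 2 * L y ^ 2 - φ (x + y) := by
          refine ciSup_le ?_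
          rintro ⟨ψ, m, hψ⟩
          have hG : (fun y => C ^ 2 * L y ^ 2) (0 : EuclideanSpace ℝ (Fin d)) = 0 := by simp [hL0]
          have := hle (max n m + 1) (fun x => (φ (x + y) + ψ (x - y)) / 2 - C ^ 2 * L y ^ 2)
            ⟨y, φ, payoffs_mono _ _ hG (le_max_left n m) hφ,
              ψ, payoffs_mono _ _ hG (le_max_right n m) hψ, rfl⟩ x
          simp only at this ⊢
          linarith
        simp only at h2 ⊢
        linarith
      linarith
    calc V (x + y) / (2 * C ^ 2) + V (x - y) / (2 * C ^ 2)
        = (V (x + y) + V (x - y)) / (2 * C ^ 2) := by ring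
      _ ≤ (2 * V x + 2 * C ^ 2 * L y ^ 2) / (2 * C ^ 2) := by gcongr
      _ = _ := by field_simp

/-- martingale type `2` → ideal regularizer. If for every predictable
sequence `E‖x₀ + Σ εᵢ xᵢ(ε)‖_{𝒳^c}² ≤ C²(‖x₀‖_ℒ² + Σᵢ E‖xᵢ(ε)‖_ℒ²)`, then there exists a
nonnegative convex `2`-homogeneous `f₀` which is `1`-strongly convex w.r.t. `‖·‖_{ℒ^c}`,
satisfies `½‖x‖_{ℒ^c}² ≤ f₀(x) ≤ (C²/2)‖x‖_𝒳²`, and the Lipschitz estimate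
`|f₀(x₁) − f₀(x₂)| ≤ C²‖x₁−x₂‖_𝒳·max(‖x₁‖_𝒳, ‖x₂‖_𝒳)`. -/
theorem stmt11 {d : ℕ} (𝒳 ℒ : Set (EuclideanSpace ℝ (Fin d))) (r R C : ℝ)
    (hr : 0 < r) (hrR : r ≤ R) (hC : 0 < C)
    (hconv𝒳 : Convex ℝ 𝒳) (hsym𝒳 : ∀ x ∈ 𝒳, -x ∈ 𝒳)
    (hball𝒳₁ : Metric.closedBall (0 : EuclideanSpace ℝ (Fin d)) r ⊆ 𝒳)
    (hball𝒳₂ : 𝒳 ⊆ Metric.closedBall (0 : EuclideanSpace ℝ (Fin d)) R)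
    (hconvℒ : Convex ℝ ℒ) (hsymℒ : ∀ x ∈ ℒ, -x ∈ ℒ)
    (hballℒ₁ : Metric.closedBall (0 : EuclideanSpace ℝ (Fin d)) r ⊆ ℒ)
    (hballℒ₂ : ℒ ⊆ Metric.closedBall (0 : EuclideanSpace ℝ (Fin d)) R)
    (hmg : ∀ (n : ℕ) (x₀ : EuclideanSpace ℝ (Fin d))
        (x : Fin n → (Fin n → Bool) → EuclideanSpace ℝ (Fin d)),
      (∀ (i : Fin n) (ε ε' : Fin n → Bool), (∀ j : Fin n, j < i → ε j = ε' j) →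
        x i ε = x i ε') →
      (∑ ε : Fin n → Bool,
          gauge (dualSet 𝒳) (x₀ + ∑ i : Fin n, signv (ε i) • x i ε) ^ 2) / 2 ^ n
        ≤ C ^ 2 * (gauge ℒ x₀ ^ 2 +
            ∑ i : Fin n, (∑ ε : Fin n → Bool, gauge ℒ (x i ε) ^ 2) / 2 ^ n)) :
    ∃ f₀ : EuclideanSpace ℝ (Fin d) → ℝ,
      (∀ x, 0 ≤ f₀ x) ∧
      ConvexOn ℝ Set.univ f₀ ∧
      (∀ t : ℝ, 0 ≤ t → ∀ y, f₀ (t • y) = t ^ 2 * f₀ y) ∧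
      -- (i) `1`-strong convexity w.r.t. `‖·‖_{ℒ^c}`, via subgradients
      (∀ x y g : EuclideanSpace ℝ (Fin d),
        (∀ z, f₀ x + ⟪g, z - x⟫ ≤ f₀ z) →
        f₀ x + ⟪g, y - x⟫ + (1 / 2) * gauge (dualSet ℒ) (y - x) ^ 2 ≤ f₀ y) ∧
      -- (ii) value bounds
      (∀ x, (1 / 2) * gauge (dualSet ℒ) x ^ 2 ≤ f₀ x ∧
        f₀ x ≤ (C ^ 2 / 2) * gauge 𝒳 x ^ 2) ∧
      -- (iii) Lipschitz-type estimate
      (∀ x₁ x₂, |f₀ x₁ - f₀ x₂|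
        ≤ C ^ 2 * gauge 𝒳 (x₁ - x₂) * max (gauge 𝒳 x₁) (gauge 𝒳 x₂)) := by
  have hR : 0 < R := hr.trans_le hrR
  have aX : Absorbent ℝ 𝒳 := absorbent_of_ball hr hball𝒳₁
  have aXd : Absorbent ℝ (dualSet 𝒳) := absorbent_of_ball (inv_pos.2 hR) (dual_ball hR hball𝒳₂)
  have hsm : ∀ (K : Set (EuclideanSpace ℝ (Fin d))) (t : ℝ), 0 ≤ t → ∀ x,
      gauge K (t • x) = t * gauge K x := fun K t ht x => by
    rw [gauge_smul_of_nonneg ht, smul_eq_mul]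
  obtain ⟨W, hW1, hW2, hW3, hW4⟩ := exists_potential (gauge (dualSet 𝒳)) (gauge ℒ) C hC
    (fun x => gauge_nonneg x) (hsm _) (hsm _) hmg
  have hub : ∀ x p, ⟪x, p⟫ - W p ≤ (C ^ 2 / 2) * gauge 𝒳 x ^ 2 := by
    intro x p
    have h1 := inner_le_gauge aX aXd x p
    have h2 := hW1 p
    rw [div_le_iff₀ (by positivity)] at h2
    have h3 : 2 * C ^ 2 * (⟪x, p⟫ - W p) ≤ 2 * C ^ 2 * ((C ^ 2 / 2) * gauge 𝒳 x ^ 2) := by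
      nlinarith [sq_nonneg (gauge (dualSet 𝒳) p - C ^ 2 * gauge 𝒳 x),
        mul_le_mul_of_nonneg_left h1 (by positivity : 0 ≤ 2 * C ^ 2)]
    exact le_of_mul_le_mul_left h3 (by positivity)
  let f : EuclideanSpace ℝ (Fin d) → ℝ := fun x => ⨆ p, (⟪x, p⟫ - W p)
  have hle : ∀ x p, ⟪x, p⟫ - W p ≤ f x := fun x p =>
    le_ciSup (f := fun p => ⟪x, p⟫ - W p)
      ⟨(C ^ 2 / 2) * gauge 𝒳 x ^ 2, by rintro _ ⟨q, rfl⟩; exact hub x q⟩ p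
  have hfu : ∀ x, f x ≤ (C ^ 2 / 2) * gauge 𝒳 x ^ 2 := fun x => ciSup_le (hub x)
  have hfl : ∀ x, (1 / 2) * gauge (dualSet ℒ) x ^ 2 ≤ f x := fun x =>
    gauge_dual_sq_le x (f x) fun p => by linarith [hle x p, hW2 p]
  have hf0 : ∀ x, 0 ≤ f x := fun x => le_trans (by positivity) (hfl x)
  have hconv : ConvexOn ℝ Set.univ f := by
    refine ⟨convex_univ, fun x _ y _ a b ha hb hab => ciSup_le fun p => ?_⟩
    rw [inner_add_left, real_inner_smul_left, real_inner_smul_left, smul_eq_mul, smul_eq_mul]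
    have hb' : b = 1 - a := by linarith
    subst hb'
    nlinarith [mul_le_mul_of_nonneg_left (hle x p) ha, mul_le_mul_of_nonneg_left (hle y p) hb]
  have hhom1 : ∀ t : ℝ, 0 < t → ∀ y, f (t • y) ≤ t ^ 2 * f y := by
    intro t ht y
    refine ciSup_le fun p => ?_
    have h1 := hle y (t⁻¹ • p)
    have h2 := hW3 t⁻¹ (inv_pos.2 ht) p
    rw [real_inner_smul_right] at h1
    rw [real_inner_smul_left]
    have h3 := mul_le_mul_of_nonneg_left
      (show t⁻¹ * ⟪y, p⟫ - t⁻¹ ^ 2 * W p ≤ f y by linarith) (sq_nonneg t)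
    have h4 : t ^ 2 * (t⁻¹ * ⟪y, p⟫ - t⁻¹ ^ 2 * W p) = t * ⟪y, p⟫ - W p := by
      field_simp
    linarith
  have hhom : ∀ t : ℝ, 0 ≤ t → ∀ y, f (t • y) = t ^ 2 * f y := by
    intro t ht y
    rcases ht.eq_or_lt with rfl | ht
    · have h1 := hfu 0
      have h2 := hf0 0
      rw [gauge_zero] at h1
      rw [zero_smul]
      linarith
    · refine le_antisymm (hhom1 t ht y) ?_
      have h := hhom1 t⁻¹ (inv_pos.2 ht) (t • y)
      rw [inv_smul_smul₀ ht.ne', inv_pow, ← div_eq_inv_mul, le_div_iff₀ (by positivity)] at h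
      linarith
  have hmid : ∀ x y, f ((1 / 2 : ℝ) • (x + y)) + 1 / 8 * gauge (dualSet ℒ) (y - x) ^ 2
      ≤ 1 / 2 * f x + 1 / 2 * f y := by
    intro x y
    have : f ((1 / 2 : ℝ) • (x + y)) ≤
        1 / 2 * f x + 1 / 2 * f y - 1 / 8 * gauge (dualSet ℒ) (y - x) ^ 2 := by
      refine ciSup_le fun p => ?_
      have h := gauge_dual_sq_le (K := ℒ) ((1 / 2 : ℝ) • (y - x))
        (1 / 2 * f x + 1 / 2 * f y - (⟪(1 / 2 : ℝ) • (x + y), p⟫ - W p)) (fun h => by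
          have h1 := hle y (p + h)
          have h2 := hle x (p - h)
          have h3 := hW4 p h
          rw [inner_add_right] at h1
          rw [inner_sub_right] at h2
          rw [real_inner_smul_left, real_inner_smul_left, inner_sub_left, inner_add_left]
          linarith)
      rw [hsm _ _ (by norm_num)] at h
      linarith
    linarith
  have hlip : ∀ x₁ x₂, f x₁ - f x₂
      ≤ C ^ 2 * gauge 𝒳 (x₁ - x₂) * max (gauge 𝒳 x₁) (gauge 𝒳 x₂) := by
    intro x₁ x₂
    have g0 : ∀ x, 0 ≤ gauge 𝒳 x := fun x => gauge_nonneg x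
    have hs : ∀ x, √(f x) ≤ (C / √2) * gauge 𝒳 x := by
      intro x
      refine Real.sqrt_le_iff.2 ⟨mul_nonneg (by positivity) (g0 x), ?_⟩
      rw [mul_pow, div_pow, Real.sq_sqrt (by norm_num)]
      exact hfu x
    have ht := sqrt_triangle f hf0 hconv hhom x₂ (x₁ - x₂)
    rw [add_sub_cancel] at ht
    have e1 := Real.sq_sqrt (hf0 x₁)
    have e2 := Real.sq_sqrt (hf0 x₂)
    have hm0 : 0 ≤ max (gauge 𝒳 x₁) (gauge 𝒳 x₂) := (g0 x₁).trans (le_max_left _ _)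
    have hc0 : 0 ≤ C / √2 := by positivity
    have b1 : √(f x₁) ≤ (C / √2) * max (gauge 𝒳 x₁) (gauge 𝒳 x₂) :=
      (hs x₁).trans (mul_le_mul_of_nonneg_left (le_max_left _ _) hc0)
    have b2 : √(f x₂) ≤ (C / √2) * max (gauge 𝒳 x₁) (gauge 𝒳 x₂) :=
      (hs x₂).trans (mul_le_mul_of_nonneg_left (le_max_right _ _) hc0)
    have b3 := hs (x₁ - x₂)
    have e3 : (C / √2) * (C / √2) * 2 = C ^ 2 := by
      have : √2 * √2 = (2 : ℝ) := Real.mul_self_sqrt (by norm_num)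
      field_simp
      nlinarith
    calc f x₁ - f x₂ = (√(f x₁) - √(f x₂)) * (√(f x₁) + √(f x₂)) := by
          rw [← e1, ← e2]; simp only [Real.sqrt_sq (Real.sqrt_nonneg _)]; ring
      _ ≤ ((C / √2) * gauge 𝒳 (x₁ - x₂)) *
          ((C / √2) * max (gauge 𝒳 x₁) (gauge 𝒳 x₂) +
            (C / √2) * max (gauge 𝒳 x₁) (gauge 𝒳 x₂)) := by
          refine mul_le_mul (by linarith) (by linarith) (by positivity)
            (mul_nonneg hc0 (g0 _))
      _ = (C / √2) * (C / √2) * 2 * gauge 𝒳 (x₁ - x₂) * max (gauge 𝒳 x₁) (gauge 𝒳 x₂) := by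
          ring
      _ = _ := by rw [e3]
  refine ⟨f, hf0, hconv, hhom, strong_of_midpoint f (gauge (dualSet ℒ)) (hsm _) hmid,
    fun x => ⟨hfl x, hfu x⟩, fun x₁ x₂ => abs_sub_le_iff.2 ⟨hlip x₁ x₂, ?_⟩⟩
  have h := hlip x₂ x₁
  rwa [max_comm, ← neg_sub x₁ x₂, gauge_neg hsym𝒳] at h
end

section
/- Let 𝒳 ⊆ ℝ^d be a closed symmetric convex set with B(0, r) ⊆ 𝒳 ⊆ B(0, R) for some 0 < r ≤ R, let 𝒳^c be its dual set, and let C > 0. Let g : ℝ^d → ℝ satisfy g(z) ≥ (1/C²)‖z‖_{𝒳^c}² for all z, and define f(x) := sup_z (⟨x, z⟩ − g(z)). Assume that for every x the supremum is attained and f(x) ≥ 0. Then for all x₁, x₂ ∈ ℝ^d: |f(x₁) − f(x₂)| ≤ C²·‖x₁ − x₂‖_𝒳·max(‖x₁‖_𝒳, ‖x₂‖_𝒳). -/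
open RealInnerProductSpace

theorem holder_aux {d : ℕ} (𝒳 : Set (EuclideanSpace ℝ (Fin d))) (r R : ℝ)
    (hr : 0 < r) (hrR : r ≤ R)
    (hball₁ : Metric.closedBall (0 : EuclideanSpace ℝ (Fin d)) r ⊆ 𝒳)
    (hball₂ : 𝒳 ⊆ Metric.closedBall (0 : EuclideanSpace ℝ (Fin d)) R)
    (x z : EuclideanSpace ℝ (Fin d)) :
    ⟪x, z⟫ ≤ gauge 𝒳 x * gauge (dualSet 𝒳) z := by
  have hR : 0 < R := hr.trans_le hrR
  have hA : Absorbent ℝ 𝒳 :=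
    absorbent_nhds_zero (Filter.mem_of_superset (Metric.closedBall_mem_nhds 0 hr) hball₁)
  have hB : Absorbent ℝ (dualSet 𝒳) := by
    refine absorbent_nhds_zero (Filter.mem_of_superset
      (Metric.closedBall_mem_nhds 0 (inv_pos.mpr hR)) ?_)
    intro u hu y hy
    have hy' := hball₂ hy
    rw [mem_closedBall_zero_iff] at hu hy'
    calc ⟪u, y⟫ ≤ ‖u‖ * ‖y‖ := real_inner_le_norm u y
      _ ≤ R⁻¹ * R := by gcongr
      _ = 1 := inv_mul_cancel₀ hR.ne'
  have key : ∀ a > gauge 𝒳 x, ∀ b > gauge (dualSet 𝒳) z, ⟪x, z⟫ ≤ a * b := by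
    intro a ha b hb
    obtain ⟨a', ha0, haa, x', hx', rfl⟩ := exists_lt_of_gauge_lt hA ha
    obtain ⟨b', hb0, hbb, z', hz', rfl⟩ := exists_lt_of_gauge_lt hB hb
    have h1 : ⟪z', x'⟫ ≤ 1 := hz' x' hx'
    rw [real_inner_comm] at h1
    simp only [real_inner_smul_left, real_inner_smul_right]
    calc _ = (a' * b') * ⟪x', z'⟫ := by ring
      _ ≤ (a' * b') * 1 := by gcongr
      _ ≤ a * b := by
        rw [mul_one]
        exact mul_le_mul haa.le hbb.le hb0.le (ha0.trans haa).le
  have hc : Filter.Tendsto (fun e : ℝ => (gauge 𝒳 x + e) * (gauge (dualSet 𝒳) z + e))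
      (nhdsWithin 0 (Set.Ioi 0)) (nhds ((gauge 𝒳 x + 0) * (gauge (dualSet 𝒳) z + 0))) :=
    (Continuous.tendsto (by fun_prop) 0).mono_left nhdsWithin_le_nhds
  rw [add_zero, add_zero] at hc
  refine ge_of_tendsto hc ?_
  filter_upwards [self_mem_nhdsWithin] with e he
  have he' : 0 < e := he
  exact key _ (by linarith) _ (by linarith)

/-- If `g(z) ≥ (1/C²)‖z‖_{𝒳^c}²` and `f(x) = sup_z (⟨x,z⟩ − g(z))` with
the supremum attained and `f ≥ 0`, then
`|f(x₁) − f(x₂)| ≤ C²‖x₁−x₂‖_𝒳·max(‖x₁‖_𝒳, ‖x₂‖_𝒳)`. -/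
theorem stmt12 {d : ℕ} (𝒳 : Set (EuclideanSpace ℝ (Fin d))) (r R C : ℝ)
    (hr : 0 < r) (hrR : r ≤ R) (hC : 0 < C)
    (hclosed : IsClosed 𝒳) (hconv : Convex ℝ 𝒳) (hsym : ∀ x ∈ 𝒳, -x ∈ 𝒳)
    (hball₁ : Metric.closedBall (0 : EuclideanSpace ℝ (Fin d)) r ⊆ 𝒳)
    (hball₂ : 𝒳 ⊆ Metric.closedBall (0 : EuclideanSpace ℝ (Fin d)) R)
    (g f : EuclideanSpace ℝ (Fin d) → ℝ)
    (hg : ∀ z, (1 / C ^ 2) * gauge (dualSet 𝒳) z ^ 2 ≤ g z)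
    (hattain : ∀ x, ∃ z, f x = ⟪x, z⟫ - g z ∧ ∀ z', ⟪x, z'⟫ - g z' ≤ f x)
    (hfnonneg : ∀ x, 0 ≤ f x)
    (x₁ x₂ : EuclideanSpace ℝ (Fin d)) :
    |f x₁ - f x₂| ≤ C ^ 2 * gauge 𝒳 (x₁ - x₂) * max (gauge 𝒳 x₁) (gauge 𝒳 x₂) := by
  have hol := holder_aux 𝒳 r R hr hrR hball₁ hball₂
  have main : ∀ x y, f x - f y ≤ C ^ 2 * gauge 𝒳 (x - y) * gauge 𝒳 x := by
    intro x y
    obtain ⟨z, hz, -⟩ := hattain x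
    obtain ⟨w, -, hw⟩ := hattain y
    have h1 := hw z
    have h2 := hol (x - y) z
    rw [inner_sub_left] at h2
    have h3 := hol x z
    have h4 := hg z
    have h5 := hfnonneg x
    have n1 := gauge_nonneg (s := 𝒳) (x - y)
    have n2 := gauge_nonneg (s := 𝒳) x
    have n3 := gauge_nonneg (s := dualSet 𝒳) z
    have h6 : gauge (dualSet 𝒳) z ≤ C ^ 2 * gauge 𝒳 x := by
      have h7 : (1 / C ^ 2) * gauge (dualSet 𝒳) z ^ 2 ≤ gauge 𝒳 x * gauge (dualSet 𝒳) z := by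
        linarith
      rw [one_div, inv_mul_le_iff₀ (by positivity)] at h7
      rcases n3.eq_or_lt with h0 | h0
      · rw [← h0]; positivity
      · refine le_of_mul_le_mul_right ?_ h0
        linarith
    calc f x - f y ≤ gauge 𝒳 (x - y) * gauge (dualSet 𝒳) z := by linarith
      _ ≤ gauge 𝒳 (x - y) * (C ^ 2 * gauge 𝒳 x) := by gcongr
      _ = _ := by ring
  have n1 := gauge_nonneg (s := 𝒳) (x₁ - x₂)
  have hs : gauge 𝒳 (x₂ - x₁) = gauge 𝒳 (x₁ - x₂) := by
    rw [← neg_sub, gauge_neg hsym]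
  rw [abs_sub_le_iff]
  constructor
  · refine (main x₁ x₂).trans ?_
    gcongr
    exact le_max_left _ _
  · refine (main x₂ x₁).trans ?_
    rw [hs]
    gcongr
    exact le_max_right _ _
end

section
/- Let N be a norm on ℝ^d satisfying r·‖w‖₂ ≤ N(w) ≤ R·‖w‖₂ for all w, where 0 < r ≤ R, and let Σ be a symmetric positive semidefinite d×d matrix with operator norm at most c₂. Then for all unit vectors v, ṽ ∈ ℝ^d (‖v‖₂ = ‖ṽ‖₂ = 1): |vᵀΣv / N(v)² − ṽᵀΣṽ / N(ṽ)²| ≤ (4c₂R / r³)·‖v − ṽ‖₂. -/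
open RealInnerProductSpace

/-- For a norm `N` with `r‖w‖₂ ≤ N(w) ≤ R‖w‖₂` and a symmetric PSD matrix
`Σ` with operator norm at most `c₂`, the normalized quadratic form `v ↦ vᵀΣv/N(v)²` is
`(4c₂R/r³)`-Lipschitz on the Euclidean unit sphere. -/
theorem stmt16 {d : ℕ} (N : EuclideanSpace ℝ (Fin d) → ℝ) (r R c₂ : ℝ)
    (hr : 0 < r) (hrR : r ≤ R)
    (hN_add : ∀ x y, N (x + y) ≤ N x + N y)
    (hN_smul : ∀ (c : ℝ) x, N (c • x) = |c| * N x)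
    (hN_lb : ∀ w : EuclideanSpace ℝ (Fin d), r * ‖w‖ ≤ N w)
    (hN_ub : ∀ w : EuclideanSpace ℝ (Fin d), N w ≤ R * ‖w‖)
    (A : Matrix (Fin d) (Fin d) ℝ) (hA : A.PosSemidef)
    (hAop : ∀ u : EuclideanSpace ℝ (Fin d), ‖Matrix.toEuclideanLin A u‖ ≤ c₂ * ‖u‖)
    (v w : EuclideanSpace ℝ (Fin d)) (hv : ‖v‖ = 1) (hw : ‖w‖ = 1) :
    |⟪v, Matrix.toEuclideanLin A v⟫ / N v ^ 2
        - ⟪w, Matrix.toEuclideanLin A w⟫ / N w ^ 2|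
      ≤ (4 * c₂ * R / r ^ 3) * ‖v - w‖ := by
  have hp : r ≤ N v := by simpa [hv] using hN_lb v
  have hq : r ≤ N w := by simpa [hw] using hN_lb w
  have hc : 0 ≤ c₂ := by
    have h1 := hAop v
    rw [hv, mul_one] at h1
    exact (norm_nonneg _).trans h1
  have hδ : 0 ≤ ‖v - w‖ := norm_nonneg _
  have hpq : |N v - N w| ≤ R * ‖v - w‖ := by
    have h1 := hN_add (v - w) w
    have h2 := hN_add (w - v) v
    rw [sub_add_cancel] at h1 h2
    have h3 := hN_ub (v - w)
    have h4 := hN_ub (w - v)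
    rw [norm_sub_rev w v] at h4
    rw [abs_le]
    constructor <;> linarith
  have hb : |⟪w, Matrix.toEuclideanLin A w⟫| ≤ c₂ := by
    have h1 := abs_real_inner_le_norm w (Matrix.toEuclideanLin A w)
    have h2 := hAop w
    rw [hw] at h1 h2
    linarith
  have hab : |⟪v, Matrix.toEuclideanLin A v⟫ - ⟪w, Matrix.toEuclideanLin A w⟫|
      ≤ 2 * c₂ * ‖v - w‖ := by
    have e : ⟪v, Matrix.toEuclideanLin A v⟫ - ⟪w, Matrix.toEuclideanLin A w⟫
        = ⟪v, Matrix.toEuclideanLin A (v - w)⟫ + ⟪v - w, Matrix.toEuclideanLin A w⟫ := by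
      rw [map_sub, inner_sub_right, inner_sub_left]; ring
    have h1 := abs_real_inner_le_norm v (Matrix.toEuclideanLin A (v - w))
    have h2 := abs_real_inner_le_norm (v - w) (Matrix.toEuclideanLin A w)
    have h3 := hAop (v - w)
    have h4 := hAop w
    rw [hv] at h1
    rw [hw] at h4
    have h5 := mul_le_mul_of_nonneg_left h4 hδ
    rw [e]
    refine (abs_add_le _ _).trans ?_
    linarith
  generalize ⟪v, Matrix.toEuclideanLin A v⟫ = a at *
  generalize ⟪w, Matrix.toEuclideanLin A w⟫ = b at *
  generalize N v = p at *
  generalize N w = q at *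
  generalize ‖v - w‖ = δ at *
  have hp0 : 0 < p := hr.trans_le hp
  have hq0 : 0 < q := hr.trans_le hq
  have hR : 0 < R := hr.trans_le hrR
  have e : a / p ^ 2 - b / q ^ 2
      = (a - b) / p ^ 2 + (-(b * (p - q)) / (p * q ^ 2) + -(b * (p - q)) / (p ^ 2 * q)) := by
    field_simp
    ring
  have hbp : |b * (p - q)| ≤ c₂ * (R * δ) := by
    rw [abs_mul]
    exact mul_le_mul hb hpq (abs_nonneg _) hc
  have t1 : |(a - b) / p ^ 2| ≤ 2 * c₂ * R * δ / r ^ 3 := by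
    rw [abs_div, abs_of_pos (by positivity : 0 < p ^ 2)]
    calc |a - b| / p ^ 2 ≤ (2 * c₂ * δ) / r ^ 2 := by gcongr
      _ = (2 * c₂ * δ) * r / r ^ 3 := by field_simp
      _ ≤ (2 * c₂ * δ) * R / r ^ 3 := by gcongr
      _ = _ := by ring
  have t2 : |-(b * (p - q)) / (p * q ^ 2)| ≤ c₂ * (R * δ) / r ^ 3 := by
    rw [abs_div, abs_neg, abs_of_pos (by positivity : 0 < p * q ^ 2)]
    have : r ^ 3 ≤ p * q ^ 2 := by
      calc r ^ 3 = r * r ^ 2 := by ring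
        _ ≤ _ := by gcongr
    gcongr
  have t3 : |-(b * (p - q)) / (p ^ 2 * q)| ≤ c₂ * (R * δ) / r ^ 3 := by
    rw [abs_div, abs_neg, abs_of_pos (by positivity : 0 < p ^ 2 * q)]
    have : r ^ 3 ≤ p ^ 2 * q := by
      calc r ^ 3 = r ^ 2 * r := by ring
        _ ≤ _ := by gcongr
    gcongr
  rw [e]
  refine (abs_add_le _ _).trans ((add_le_add t1 ((abs_add_le _ _).trans
    (add_le_add t2 t3))).trans (le_of_eq ?_))
  ring
end
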